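/- arXiv:2112.12034 — 2 statements merged into one kernel-verified Lean document; each statement's English description precedes it below -/
import Mathlib

section
/- Let G be a simple graph on Fin N admitting a completely degenerate equilibrium of the identical Kuramoto system. Then every vertex of G has even degree. -/
open Real

open Classical in
/-- Adjacency indicator: `1` if `j` and `k` are adjacent in `G`, `0` otherwise. -/
noncomputable def adjInd {V : Type*} (G : SimpleGraph V) (j k : V) : ℝ :=
  if G.Adj j k then 1 else 0

/-- A completely degenerate equilibrium of the identical Kuramoto system on `G`. -/
def IsCDE {V : Type*} [Fintype V] (G : SimpleGraph V) (θ : V → ℝ) : Prop :=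
  (∀ k, ∑ j, adjInd G j k * Real.sin (θ j - θ k) = 0) ∧
  (∀ j k, G.Adj j k → Real.cos (θ j - θ k) = 0)

theorem even_card_of_sum_eq_zero {ι R : Type*} [AddCommGroupWithOne R] [CharZero R]
    {s : Finset ι} {f : ι → R} (hf : ∀ i ∈ s, f i = 1 ∨ f i = -1) (hsum : ∑ i ∈ s, f i = 0) :
    Even s.card := by
  classical
  have sum_pos : ∑ i ∈ s with f i = 1, f i = (s.filter (f · = 1)).card := by
    rw [Finset.sum_congr rfl fun i hi ↦ (Finset.mem_filter.mp hi).2, Finset.sum_const,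
      nsmul_one]
  have sum_neg : ∑ i ∈ s with ¬ f i = 1, f i = -((s.filter (¬ f · = 1)).card : R) := by
    have eq_neg_one : ∀ i ∈ s.filter (¬ f · = 1), f i = -1 := fun i hi ↦
      have ⟨hi, hne⟩ := Finset.mem_filter.mp hi
      (hf i hi).resolve_left hne
    rw [Finset.sum_congr rfl eq_neg_one, Finset.sum_const, smul_neg, nsmul_one]
  have card_eq : (s.filter (f · = 1)).card = (s.filter (¬ f · = 1)).card := by
    rw [← Finset.sum_filter_add_sum_filter_not s (f · = 1), sum_pos, sum_neg,
      ← sub_eq_add_neg, sub_eq_zero] at hsum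
    exact_mod_cast hsum
  rw [← Finset.card_filter_add_card_filter_not (s := s) (f · = 1), ← card_eq]
  exact ⟨_, rfl⟩

section Graph

variable {V : Type*} (G : SimpleGraph V) (k : V) [Fintype (G.neighborSet k)]

theorem sum_adjInd_mul [Fintype V] (f : V → ℝ) :
    ∑ j, adjInd G j k * f j = ∑ j ∈ G.neighborFinset k, f j := by
  classical
  simp only [adjInd, ite_mul, one_mul, zero_mul, G.adj_comm _ k, ← G.mem_neighborFinset k,
    Finset.sum_ite_mem, Finset.univ_inter]

theorem even_degree_of_sum_sin_eq_zero {θ : V → ℝ}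
    (hsin : ∑ j ∈ G.neighborFinset k, sin (θ j - θ k) = 0)
    (hcos : ∀ j, G.Adj j k → cos (θ j - θ k) = 0) : Even (G.degree k) := by
  rw [← G.card_neighborFinset_eq_degree]
  refine even_card_of_sum_eq_zero (fun j hj ↦ ?_) hsin
  exact cos_eq_zero_iff_sin_eq.mp (hcos j ((G.mem_neighborFinset k j).mp hj).symm)

theorem stmt1_general [Fintype V] (h : ∃ θ : V → ℝ, IsCDE G θ) : Even (G.degree k) := by
  obtain ⟨θ, equilibrium, degenerate⟩ := h
  refine even_degree_of_sum_sin_eq_zero G k ?_ (degenerate · k)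
  rw [← sum_adjInd_mul, equilibrium k]

end Graph

/-- if `G` admits a completely degenerate equilibrium, every vertex has even
degree. -/
theorem stmt1 {N : ℕ} (G : SimpleGraph (Fin N)) [DecidableRel G.Adj]
    (h : ∃ θ : Fin N → ℝ, IsCDE G θ) :
    ∀ k : Fin N, Even (G.degree k) :=
  fun k ↦ stmt1_general G k h
end

section
/- Let G be a connected simple graph on Fin N with N ≥ 2 and let θ : Fin N → ℝ be a completely degenerate equilibrium of the identical Kuramoto system on G. Then θ is a saddle point of the energy E: θ is neither a local minimum nor a local maximum of E : (Fin N → ℝ) → ℝ, E(φ) = (1/2)·∑_{j,k} a(j,k)·(1 − cos(φ j − φ k)). -/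
open Real

/-- The energy of the identical Kuramoto system (sum over ordered pairs, halved). -/
noncomputable def energy {N : ℕ} (G : SimpleGraph (Fin N)) (φ : Fin N → ℝ) : ℝ :=
  (1 / 2) * ∑ p, ∑ q, adjInd G p q * (1 - Real.cos (φ p - φ q))

/-!
If `cos d = 0` then `cos (d + x) = -sin d * sin x` is odd in `x`. Hence, when all coupled phases are
a quarter turn apart, the energy satisfies `E (θ + v) + E (θ - v) = 2 * E θ`, so that a local
extremum at `θ` would make `E` constant near `θ`. But `E` is nowhere locally constant: its mixed
second difference along two coupled coordinates `j` and `k`, with opposite steps `s` and `-s`, only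
sees the edge joining them and equals `2 * cos (φ j - φ k + s) * (1 - cos s)`, which is nonzero for
small `s ≠ 0`.
-/

open Filter Topology fwdDiff

section LocalExtr

variable {E β : Type*} [AddCommGroup E] [TopologicalSpace E] [IsTopologicalAddGroup E]
  [AddCommMonoid β] [PartialOrder β] [IsOrderedCancelAddMonoid β] {f : E → β} {a : E}

theorem eventually_eq_of_isLocalMin_of_add_sub
    (hf : ∀ v, f (a + v) + f (a - v) = f a + f a) (hmin : IsLocalMin f a) :
    ∀ᶠ x in 𝓝 a, f x = f a := by
  have reflection : Tendsto (fun x ↦ a - (x - a)) (𝓝 a) (𝓝 a) :=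
    Continuous.tendsto' (by fun_prop) a a (by simp)
  filter_upwards [hmin, reflection.eventually hmin] with x hx hx'
  have hsum : f x + f (a - (x - a)) = f a + f a := by simpa using hf (x - a)
  exact le_antisymm (le_of_add_le_add_right ((add_le_add_right hx' _).trans hsum.le)) hx

theorem eventually_eq_of_isLocalExtr_of_add_sub
    (hf : ∀ v, f (a + v) + f (a - v) = f a + f a) (hext : IsLocalExtr f a) :
    ∀ᶠ x in 𝓝 a, f x = f a :=
  hext.elim (eventually_eq_of_isLocalMin_of_add_sub hf)
    (eventually_eq_of_isLocalMin_of_add_sub (β := βᵒᵈ) hf)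

end LocalExtr

theorem eventually_fwdDiff_fwdDiff_eq_zero {E G : Type*} [AddCommMonoid E] [TopologicalSpace E]
    [ContinuousAdd E] [AddCommGroup G] {f : E → G} {a : E} (hf : ∀ᶠ x in 𝓝 a, f x = f a) :
    ∀ᶠ w : E × E in 𝓝 0, Δ_[w.1] (Δ_[w.2] f) a = 0 := by
  have along (g : E × E → E) (hg : Continuous g) (hg0 : g 0 = a) : ∀ᶠ w in 𝓝 0, f (g w) = f a :=
    (hg.tendsto' 0 a hg0).eventually hf
  filter_upwards [along (fun w ↦ a + w.1 + w.2) (by fun_prop) (by simp),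
    along (fun w ↦ a + w.1) (by fun_prop) (by simp),
    along (fun w ↦ a + w.2) (by fun_prop) (by simp)] with w h h₁ h₂
  simp only [fwdDiff, h, h₁, h₂, sub_self]

theorem eventually_cos_add_ne (x t c : ℝ) : ∀ᶠ s in 𝓝[≠] t, cos (x + s) ≠ c := by
  have hcos : AnalyticOnNhd ℝ (fun s ↦ cos (x + s)) Set.univ := fun s _ ↦ by fun_prop
  refine ((hcos t trivial).eventually_eq_or_eventually_ne analyticAt_const).resolve_left fun h ↦ ?_
  have hconst : (fun s ↦ cos (x + s)) = fun _ ↦ c := hcos.eq_of_eventuallyEq analyticOnNhd_const h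
  have h_one : 1 = c := by simpa using congrFun hconst (-x)
  have h_neg_one : -1 = c := by simpa using congrFun hconst (π - x)
  linarith

section WeightedEnergy

variable {V : Type*} {A : V → V → ℝ}

/-- The energy stored in the ordered pair `(p, q)` of oscillators coupled with strength `A p q`. -/
noncomputable def bondEnergy (A : V → V → ℝ) (p q : V) (φ : V → ℝ) : ℝ :=
  A p q * (1 - cos (φ p - φ q))

theorem bondEnergy_comm (hA : ∀ p q, A p q = A q p) (p q : V) :
    bondEnergy A p q = bondEnergy A q p := by
  ext φ
  rw [bondEnergy, bondEnergy, hA p q, ← cos_neg, neg_sub]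

theorem bondEnergy_add_add_bondEnergy_sub {θ : V → ℝ} {p q : V}
    (hθ : A p q ≠ 0 → cos (θ p - θ q) = 0) (v : V → ℝ) :
    bondEnergy A p q (θ + v) + bondEnergy A p q (θ - v)
      = bondEnergy A p q θ + bondEnergy A p q θ := by
  rcases eq_or_ne (A p q) 0 with hA | hA
  · simp only [bondEnergy, hA, zero_mul]
  · simp only [bondEnergy, Pi.add_apply, Pi.sub_apply]
    rw [add_sub_add_comm, sub_sub_sub_comm, cos_add, cos_sub (θ p - θ q), hθ hA]
    ring

theorem fwdDiff_fwdDiff_bondEnergy_eq_zero {p q : V} {u v : V → ℝ}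
    (h : u p = u q ∨ v p = v q) (φ : V → ℝ) : Δ_[u] (Δ_[v] (bondEnergy A p q)) φ = 0 := by
  rcases h with h | h <;> simp [fwdDiff, bondEnergy, add_sub_add_comm, h]

theorem fwdDiff_fwdDiff_bondEnergy_single_neg [DecidableEq V] {j k : V} (hjk : j ≠ k) (φ : V → ℝ)
    (s : ℝ) :
    Δ_[Pi.single j s] (Δ_[Pi.single k (-s)] (bondEnergy A j k)) φ
      = A j k * (2 * cos (φ j - φ k + s) * (1 - cos s)) := by
  have sum_to_product : cos (φ j - φ k + 2 * s) + cos (φ j - φ k)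
      = 2 * cos (φ j - φ k + s) * cos s := by
    rw [cos_add_cos]
    ring_nf
  calc Δ_[Pi.single j s] (Δ_[Pi.single k (-s)] (bondEnergy A j k)) φ
    _ = A j k * (2 * cos (φ j - φ k + s) - (cos (φ j - φ k + 2 * s) + cos (φ j - φ k))) := by
      simp only [fwdDiff, bondEnergy, Pi.add_apply, Pi.single_eq_same, Pi.single_eq_of_ne hjk,
        Pi.single_eq_of_ne hjk.symm, add_zero]
      ring_nf
    _ = A j k * (2 * cos (φ j - φ k + s) * (1 - cos s)) := by
      rw [sum_to_product]
      ring

variable [Fintype V]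

/-- The Kuramoto energy of a network with arbitrary real coupling strengths `A`; the energy of a
graph is the case `A = adjInd G`. As there, the sum runs over ordered pairs and is halved. -/
noncomputable def weightedEnergy (A : V → V → ℝ) (φ : V → ℝ) : ℝ :=
  (1 / 2) * ∑ p, ∑ q, bondEnergy A p q φ

theorem weightedEnergy_add_add_weightedEnergy_sub {θ : V → ℝ}
    (hθ : ∀ p q, A p q ≠ 0 → cos (θ p - θ q) = 0) (v : V → ℝ) :
    weightedEnergy A (θ + v) + weightedEnergy A (θ - v)
      = weightedEnergy A θ + weightedEnergy A θ := by
  simp only [weightedEnergy, ← mul_add, ← Finset.sum_add_distrib,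
    bondEnergy_add_add_bondEnergy_sub (hθ _ _)]

theorem fwdDiff_fwdDiff_weightedEnergy (u v φ : V → ℝ) :
    Δ_[u] (Δ_[v] (weightedEnergy A)) φ
      = (1 / 2) * ∑ p, ∑ q, Δ_[u] (Δ_[v] (bondEnergy A p q)) φ := by
  simp only [fwdDiff, weightedEnergy, mul_sub, Finset.sum_sub_distrib]

theorem fwdDiff_fwdDiff_weightedEnergy_single [DecidableEq V] (hA : ∀ p q, A p q = A q p)
    {j k : V} (hjk : j ≠ k) (φ : V → ℝ) (s t : ℝ) :
    Δ_[Pi.single j s] (Δ_[Pi.single k t] (weightedEnergy A)) φ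
      = Δ_[Pi.single j s] (Δ_[Pi.single k t] (bondEnergy A j k)) φ := by
  have other_pairs (w : V × V) (hw : w ≠ (j, k) ∧ w ≠ (k, j)) :
      Δ_[Pi.single j s] (Δ_[Pi.single k t] (bondEnergy A w.1 w.2)) φ = 0 :=
    fwdDiff_fwdDiff_bondEnergy_eq_zero (by grind) φ
  rw [fwdDiff_fwdDiff_weightedEnergy, ← Fintype.sum_prod_type',
    Fintype.sum_eq_add (j, k) (k, j) (by simp [hjk]) other_pairs, bondEnergy_comm hA k j]
  ring

theorem not_eventually_weightedEnergy_eq (hA : ∀ p q, A p q = A q p) {j k : V} (hjk : j ≠ k)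
    (hAjk : A j k ≠ 0) (φ : V → ℝ) :
    ¬ ∀ᶠ ψ in 𝓝 φ, weightedEnergy A ψ = weightedEnergy A φ := by
  classical
  intro hconst
  have path : Tendsto (fun s : ℝ ↦ ((Pi.single j s, Pi.single k (-s)) : (V → ℝ) × (V → ℝ)))
      (𝓝[≠] 0) (𝓝 0) :=
    tendsto_nhdsWithin_of_tendsto_nhds <|
      ((continuous_single j).prodMk ((continuous_single k).comp continuous_neg)).tendsto' 0 0
        (by simp)
  have cos_ne_one : ∀ᶠ s in 𝓝[≠] 0, cos s ≠ 1 := by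
    simpa only [zero_add] using eventually_cos_add_ne 0 0 1
  obtain ⟨s, hs, hcos, hcos_one⟩ :=
    ((path.eventually (eventually_fwdDiff_fwdDiff_eq_zero hconst)).and <|
      (eventually_cos_add_ne (φ j - φ k) 0 0).and cos_ne_one).exists
  rw [fwdDiff_fwdDiff_weightedEnergy_single hA hjk,
    fwdDiff_fwdDiff_bondEnergy_single_neg hjk] at hs
  have hcos_sub : 1 - cos s ≠ 0 := sub_ne_zero.2 hcos_one.symm
  exact mul_ne_zero hAjk (mul_ne_zero (mul_ne_zero two_ne_zero hcos) hcos_sub) hs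

theorem stmt13_general {A : V → V → ℝ} (hA : ∀ p q, A p q = A q p) {j k : V} (hAjk : A j k ≠ 0)
    {θ : V → ℝ} (hθ : ∀ p q, A p q ≠ 0 → cos (θ p - θ q) = 0) :
    ¬ IsLocalExtr (weightedEnergy A) θ := by
  have hjk : j ≠ k := by
    rintro rfl
    simpa using hθ j j hAjk
  exact fun hext ↦ not_eventually_weightedEnergy_eq hA hjk hAjk θ <|
    eventually_eq_of_isLocalExtr_of_add_sub (weightedEnergy_add_add_weightedEnergy_sub hθ) hext

end WeightedEnergy

theorem adjInd_comm {V : Type*} (G : SimpleGraph V) (j k : V) : adjInd G j k = adjInd G k j := by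
  classical exact if_congr (G.adj_comm j k) rfl rfl

theorem adjInd_ne_zero_iff {V : Type*} {G : SimpleGraph V} {j k : V} :
    adjInd G j k ≠ 0 ↔ G.Adj j k := by
  simp [adjInd]

theorem energy_eq_weightedEnergy {N : ℕ} (G : SimpleGraph (Fin N)) :
    energy G = weightedEnergy (adjInd G) :=
  rfl

/-- on a connected graph with at least two vertices, a completely degenerate
equilibrium is a saddle point of the energy: neither a local minimum nor a local maximum. -/
theorem stmt13 {N : ℕ} (hN : 2 ≤ N) (G : SimpleGraph (Fin N)) (hG : G.Connected)
    (θ : Fin N → ℝ) (hθ : IsCDE G θ) :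
    ¬ IsLocalMin (energy G) θ ∧ ¬ IsLocalMax (energy G) θ := by
  have : Nontrivial (Fin N) := Fin.nontrivial_iff_two_le.mpr hN
  obtain ⟨j⟩ := hG.nonempty
  obtain ⟨k, hjk⟩ := hG.preconnected.exists_adj_of_nontrivial j
  rw [← not_or, energy_eq_weightedEnergy]
  exact stmt13_general (adjInd_comm G) (adjInd_ne_zero_iff.2 hjk)
    fun p q hpq ↦ hθ.2 p q (adjInd_ne_zero_iff.1 hpq)
end
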